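/- Let A be a finite abelian group, M a countable monoid, F a linear cellular automaton on A^M that is diffusive in density, and μ a harmonically mixing probability measure. Then there exists a subset J ⊆ ℕ of Cesàro density 1 such that F^j μ converges weak* to Haar measure along j ∈ J; consequently the Cesàro averages (1/N)∑_{n=1}^N F^n μ converge weak* to Haar measure. -/

import Mathlib

open MeasureTheory Filter

/-- Evaluation at `a` of the character of `A^M` with coefficient system `χ`. -/
noncomputable def charEval {A M : Type*} [AddCommGroup A] (χ : M → AddChar A ℂ)
    (a : M → A) : ℂ :=
  ∏ᶠ m, χ m (a m)

/-- Harmonic mixing of a measure on `A^M`. -/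
def HarmonicallyMixing {A M : Type*} [AddCommGroup A] [MeasurableSpace A]
    (μ : Measure (M → A)) : Prop :=
  ∀ ε > 0, ∃ R : ℕ, ∀ χ : M → AddChar A ℂ, {m | χ m ≠ 1}.Finite →
    R < {m | χ m ≠ 1}.ncard → ‖∫ a, charEval χ a ∂μ‖ < ε

/-- A set `J ⊆ ℕ` has Cesàro density one. -/
def HasDensityOne (J : Set ℕ) : Prop :=
  Tendsto (fun N => ((J ∩ Set.Iio N).ncard : ℝ) / N) atTop (nhds 1)

section Density

theorem hasDensityOne_iff_compl {J : Set ℕ} :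
    HasDensityOne J ↔
      Tendsto (fun N : ℕ => ((Jᶜ ∩ Set.Iio N).ncard : ℝ) / N) atTop (nhds 0) := by
  have key : ∀ᶠ N : ℕ in atTop, ((Jᶜ ∩ Set.Iio N).ncard : ℝ) / N =
      1 - ((J ∩ Set.Iio N).ncard : ℝ) / N := by
    filter_upwards [eventually_gt_atTop 0] with N hN
    have h := Set.ncard_inter_add_ncard_sdiff_eq_ncard (Set.Iio N) J (Set.finite_Iio N)
    rw [Set.inter_comm, Set.sdiff_eq, Set.inter_comm (Set.Iio N) Jᶜ,
      ← Finset.coe_Iio, Set.ncard_coe_finset, Nat.card_Iio, Finset.coe_Iio] at h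
    have hN' : (N : ℝ) ≠ 0 := by positivity
    rw [eq_sub_iff_add_eq, ← add_div, div_eq_one_iff_eq hN', add_comm]
    exact_mod_cast h
  rw [HasDensityOne, tendsto_congr' key]
  constructor
  · intro h
    simpa using h.const_sub 1
  · intro h
    simpa using h.const_sub 1

theorem hasDensityOne_univ : HasDensityOne Set.univ := by
  simp [hasDensityOne_iff_compl]

theorem HasDensityOne.inter {J K : Set ℕ} (hJ : HasDensityOne J) (hK : HasDensityOne K) :
    HasDensityOne (J ∩ K) := by
  rw [hasDensityOne_iff_compl] at *
  refine squeeze_zero (fun N => by positivity) (fun N => ?_) (by simpa using hJ.add hK)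
  rw [← add_div]
  gcongr
  rw [Set.compl_inter, Set.union_inter_distrib_right]
  exact_mod_cast Set.ncard_union_le _ _

theorem exists_hasDensityOne_eventually_subset_of_antitone {J : ℕ → Set ℕ} (hanti : Antitone J)
    (hJ : ∀ k, HasDensityOne (J k)) :
    ∃ K : Set ℕ, HasDensityOne K ∧ ∀ k, ∀ᶠ n in atTop, n ∈ K → n ∈ J k := by
  have hlarge (k : ℕ) : ∃ n : ℕ, k ≤ n ∧
      ∀ N ≥ n, (((J k)ᶜ ∩ Set.Iio N).ncard : ℝ) / N ≤ 1 / ((k : ℝ) + 1) := by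
    have h := (hasDensityOne_iff_compl.1 (hJ k)).eventually_le_const
      (show (0 : ℝ) < 1 / ((k : ℝ) + 1) by positivity)
    obtain ⟨n, hn⟩ := eventually_atTop.1 h
    exact ⟨max k n, le_max_left _ _, fun N hN => hn N (le_trans (le_max_right _ _) hN)⟩
  choose t ht_ge ht using hlarge
  refine ⟨{n | ∀ k, t k ≤ n → n ∈ J k}, ?_, fun k => ?_⟩
  · rw [hasDensityOne_iff_compl, Metric.tendsto_atTop]
    intro ε hε
    obtain ⟨k₀, hk₀⟩ := exists_nat_one_div_lt hε
    refine ⟨t k₀, fun N hN => ?_⟩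
    classical
    set k := Nat.findGreatest (fun k => t k ≤ N) N
    have hk : t k ≤ N :=
      Nat.findGreatest_spec (P := fun k => t k ≤ N) ((ht_ge k₀).trans hN) hN
    have hk₀k : k₀ ≤ k := Nat.le_findGreatest ((ht_ge k₀).trans hN) hN
    have hsub : {n | ∀ k, t k ≤ n → n ∈ J k}ᶜ ∩ Set.Iio N ⊆ (J k)ᶜ ∩ Set.Iio N := by
      rintro n ⟨hn, hnN⟩
      simp only [Set.mem_compl_iff, Set.mem_ofPred_eq, not_forall] at hn
      obtain ⟨i, hi, hni⟩ := hn
      have hiN : t i ≤ N := hi.trans (le_of_lt hnN)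
      exact ⟨fun h => hni (hanti (Nat.le_findGreatest ((ht_ge i).trans hiN) hiN) h), hnN⟩
    rw [Real.dist_eq, sub_zero, abs_of_nonneg (by positivity)]
    calc (({n | ∀ k, t k ≤ n → n ∈ J k}ᶜ ∩ Set.Iio N).ncard : ℝ) / N
        ≤ (((J k)ᶜ ∩ Set.Iio N).ncard : ℝ) / N := by
          gcongr
          exact (Set.finite_Iio N).inter_of_right _
      _ ≤ 1 / ((k : ℝ) + 1) := ht k N hk
      _ ≤ 1 / ((k₀ : ℝ) + 1) := by gcongr
      _ < ε := hk₀
  · filter_upwards [eventually_ge_atTop (t k)] with n hn hnK using hnK k hn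

theorem exists_hasDensityOne_eventually_subset {ι : Type*} [Countable ι] {J : ι → Set ℕ}
    (hJ : ∀ i, HasDensityOne (J i)) :
    ∃ K : Set ℕ, HasDensityOne K ∧ ∀ i, ∀ᶠ n in atTop, n ∈ K → n ∈ J i := by
  rcases isEmpty_or_nonempty ι with hι | hι
  · exact ⟨Set.univ, hasDensityOne_univ, fun i => hι.elim i⟩
  obtain ⟨e, he⟩ := exists_surjective_nat ι
  have hdens (k : ℕ) : HasDensityOne (⋂ i ≤ k, J (e i)) := by
    induction k with
    | zero => simpa using hJ (e 0)
    | succ k ih =>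
      have h := ih.inter (hJ (e (k + 1)))
      convert h using 1
      exact Set.biInter_le_succ _ k
  obtain ⟨K, hK, hKJ⟩ := exists_hasDensityOne_eventually_subset_of_antitone
    (fun a b hab => Set.biInter_subset_biInter_left fun i hi => le_trans hi hab) hdens
  refine ⟨K, hK, fun i => ?_⟩
  obtain ⟨k, rfl⟩ := he i
  filter_upwards [hKJ k] with n hn hnK
  exact Set.mem_iInter₂.1 (hn hnK) k le_rfl

/-- A bounded sequence converging along a set of density one converges in the Cesàro sense. -/
theorem HasDensityOne.tendsto_cesaro_smul {E : Type*} [NormedAddCommGroup E] [NormedSpace ℝ E]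
    {J : Set ℕ} (hJ : HasDensityOne J) {u : ℕ → E} {l : E} {C : ℝ} (hC : ∀ n, ‖u n - l‖ ≤ C)
    (hu : Tendsto u (atTop ⊓ 𝓟 J) (nhds l)) :
    Tendsto (fun N : ℕ => (N : ℝ)⁻¹ • ∑ n ∈ Finset.range N, u n) atTop (nhds l) := by
  classical
  set v : ℕ → ℝ := fun n => if n ∈ J then ‖u n - l‖ else 0
  have hv : Tendsto v atTop (nhds 0) := by
    rw [Metric.tendsto_nhds]
    intro ε hε
    have h := Metric.tendsto_nhds.1 hu ε hε
    rw [eventually_inf_principal] at h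
    filter_upwards [h] with n hn
    by_cases hnJ : n ∈ J
    · simpa [v, hnJ, dist_eq_norm] using hn hnJ
    · simpa [v, hnJ] using hε
  have hsum : Tendsto (fun N : ℕ => (N : ℝ)⁻¹ * ∑ n ∈ Finset.range N, v n +
      C * (((Jᶜ ∩ Set.Iio N).ncard : ℝ) / N)) atTop (nhds 0) := by
    simpa using hv.cesaro.add ((hasDensityOne_iff_compl.1 hJ).const_mul C)
  rw [tendsto_iff_norm_sub_tendsto_zero]
  refine squeeze_zero' (Eventually.of_forall fun N => norm_nonneg _) ?_ hsum
  filter_upwards [eventually_gt_atTop 0] with N hN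
  have hN' : (N : ℝ) ≠ 0 := by positivity
  have hdiff : (N : ℝ)⁻¹ • ∑ n ∈ Finset.range N, u n - l =
      (N : ℝ)⁻¹ • ∑ n ∈ Finset.range N, (u n - l) := by
    rw [Finset.sum_sub_distrib, smul_sub, Finset.sum_const, Finset.card_range,
      ← Nat.cast_smul_eq_nsmul ℝ, smul_smul, inv_mul_cancel₀ hN', one_smul]
  have hcard : (((Finset.range N).filter (· ∉ J)).card : ℝ) = (Jᶜ ∩ Set.Iio N).ncard := by
    rw [← Set.ncard_coe_finset]
    congr 2
    ext n
    simp [and_comm]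
  have hbound (n : ℕ) : ‖u n - l‖ ≤ v n + if n ∉ J then C else 0 := by
    by_cases hnJ : n ∈ J
    · simp [v, hnJ]
    · simpa [v, hnJ] using hC n
  calc ‖(N : ℝ)⁻¹ • ∑ n ∈ Finset.range N, u n - l‖
      ≤ (N : ℝ)⁻¹ * ∑ n ∈ Finset.range N, (v n + if n ∉ J then C else 0) := by
        rw [hdiff, norm_smul, norm_inv, Real.norm_natCast]
        gcongr
        exact norm_sum_le_of_le _ fun n _ => hbound n
    _ = _ := by
        rw [Finset.sum_add_distrib, ← Finset.sum_filter (· ∉ J), Finset.sum_const, nsmul_eq_mul, hcard]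
        ring

theorem HasDensityOne.tendsto_cesaro_smul_Icc {E : Type*} [NormedAddCommGroup E]
    [NormedSpace ℝ E] {J : Set ℕ} (hJ : HasDensityOne J) {u : ℕ → E} {l : E} {C : ℝ}
    (hC : ∀ n, ‖u n‖ ≤ C) (hu : Tendsto u (atTop ⊓ 𝓟 J) (nhds l)) :
    Tendsto (fun N : ℕ => (N : ℝ)⁻¹ • ∑ n ∈ Finset.Icc 1 N, u n) atTop (nhds l) := by
  have hrange := hJ.tendsto_cesaro_smul (C := C + ‖l‖)
    (fun n => (norm_sub_le _ _).trans (by gcongr; exact hC n)) hu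
  have hend : Tendsto (fun N : ℕ => (N : ℝ)⁻¹ • (u N - u 0)) atTop (nhds 0) := by
    refine NormedField.tendsto_zero_smul_of_tendsto_zero_of_bounded
      tendsto_inv_atTop_nhds_zero_nat ⟨C + C, ?_⟩
    exact eventually_map.2 (Eventually.of_forall fun N =>
      (norm_sub_le _ _).trans (add_le_add (hC N) (hC 0)))
  have hsum (N : ℕ) :
      ∑ n ∈ Finset.Icc 1 N, u n = ∑ n ∈ Finset.range N, u n + (u N - u 0) := by
    induction N with
    | zero => simp
    | succ N ih =>
      rw [Finset.sum_Icc_succ_top (by omega), ih, Finset.sum_range_succ]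
      abel
  simpa only [hsum, smul_add, add_zero] using hrange.add hend

end Density

section Characters

variable {A M : Type*} [AddCommGroup A]

theorem charEval_eq_prod {χ : M → AddChar A ℂ} {s : Finset M} (hs : {m | χ m ≠ 1} ⊆ s)
    (a : M → A) : charEval χ a = ∏ m ∈ s, χ m (a m) := by
  refine finprod_eq_prod_of_mulSupport_subset _ fun m hm => hs fun h => hm ?_
  simp [h]

theorem exists_charEval_eq_prod {χ : M → AddChar A ℂ} (hχ : {m | χ m ≠ 1}.Finite) :
    ∃ s : Finset M, (∀ m, m ∈ s ↔ χ m ≠ 1) ∧ ∀ a, charEval χ a = ∏ m ∈ s, χ m (a m) :=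
  ⟨hχ.toFinset, fun m => by simp, charEval_eq_prod (by simp)⟩

/-- The character of `A^M` with a finitely supported coefficient system. -/
noncomputable def charEvalAddChar (χ : M → AddChar A ℂ) (hχ : {m | χ m ≠ 1}.Finite) :
    AddChar (M → A) ℂ where
  toFun := charEval χ
  map_zero_eq_one' := by
    obtain ⟨s, -, h⟩ := exists_charEval_eq_prod hχ
    simp [h]
  map_add_eq_mul' x y := by
    obtain ⟨s, -, h⟩ := exists_charEval_eq_prod hχ
    simp [h, AddChar.map_add_eq_mul, Finset.prod_mul_distrib]

theorem AddChar.map_sum_eq_prod {B ι R : Type*} [AddCommMonoid B] [CommMonoid R] (Ψ : AddChar B R)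
    (s : Finset ι) (f : ι → B) : Ψ (∑ i ∈ s, f i) = ∏ i ∈ s, Ψ (f i) := by
  classical
  induction s using Finset.induction_on with
  | empty => simp
  | insert i s hi ih => rw [Finset.sum_insert hi, Finset.prod_insert hi, Ψ.map_add_eq_mul, ih]

/-- A character of `A^M` depending on finitely many coordinates has a finitely supported
coefficient system. -/
theorem exists_charEval_eq_of_eq_one (Ψ : AddChar (M → A) ℂ) (s : Finset M)
    (hΨ : ∀ a : M → A, (∀ m ∈ s, a m = 0) → Ψ a = 1) :
    ∃ ψ : M → AddChar A ℂ, {m | ψ m ≠ 1}.Finite ∧ ∀ a, charEval ψ a = Ψ a := by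
  classical
  let ψ : M → AddChar A ℂ := fun m => Ψ.compAddMonoidHom (AddMonoidHom.single (fun _ => A) m)
  have hψ (m : M) (x : A) : ψ m x = Ψ (Pi.single m x) := rfl
  have hs : {m | ψ m ≠ 1} ⊆ s := by
    intro m hm
    by_contra hms
    refine hm (DFunLike.ext _ _ fun x => ?_)
    rw [hψ, AddChar.one_apply]
    refine hΨ _ fun k hk => Pi.single_eq_of_ne ?_ _
    rintro rfl
    exact hms hk
  refine ⟨ψ, s.finite_toSet.subset hs, fun a => ?_⟩
  rw [charEval_eq_prod hs]
  simp only [hψ]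
  rw [← AddChar.map_sum_eq_prod]
  have hrest : Ψ (a - ∑ m ∈ s, Pi.single m (a m)) = 1 := by
    refine hΨ _ fun m hm => ?_
    simp [Finset.sum_apply, Pi.single_apply, hm]
  conv_rhs => rw [← sub_add_cancel a (∑ m ∈ s, Pi.single m (a m))]
  rw [Ψ.map_add_eq_mul, hrest, one_mul]

theorem countable_finite_support [Finite A] [Countable M] :
    {χ : M → AddChar A ℂ | {m | χ m ≠ 1}.Finite}.Countable := by
  refine (Set.countable_range fun f : M →₀ AddChar A ℂ => (f : M → AddChar A ℂ)).mono ?_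
  intro χ hχ
  exact ⟨Finsupp.ofSupportFinite χ hχ, rfl⟩

variable [TopologicalSpace A] [DiscreteTopology A]

theorem continuous_charEval {χ : M → AddChar A ℂ} (hχ : {m | χ m ≠ 1}.Finite) :
    Continuous (charEval χ) := by
  obtain ⟨s, -, h⟩ := exists_charEval_eq_prod hχ
  rw [funext h]
  exact continuous_finsetProd _ fun m _ =>
    (continuous_of_discreteTopology (f := χ m)).comp (continuous_apply m)

/-- The pullback of a continuous character of `A^M` under a continuous endomorphism. -/
theorem exists_charEval_eq_comp {G : (M → A) → (M → A)} (hG : Continuous G)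
    (hadd : ∀ x y, G (x + y) = G x + G y) {χ : M → AddChar A ℂ} (hχ : {m | χ m ≠ 1}.Finite) :
    ∃ ψ : M → AddChar A ℂ, {m | ψ m ≠ 1}.Finite ∧ ∀ a, charEval ψ a = charEval χ (G a) := by
  let φ : (M → A) →+ (M → A) := AddMonoidHom.mk' G hadd
  have hG0 : G 0 = 0 := φ.map_zero
  obtain ⟨s, hs, hprod⟩ := exists_charEval_eq_prod hχ
  have hopen : IsOpen {a : M → A | ∀ m ∈ s, G a m = 0} := by
    have : {a : M → A | ∀ m ∈ s, G a m = 0} = ⋂ m ∈ s, (fun a => G a m) ⁻¹' {0} := by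
      ext a
      simp
    rw [this]
    exact isOpen_biInter_finset fun m _ =>
      (isOpen_discrete {(0 : A)}).preimage ((continuous_apply m).comp hG)
  obtain ⟨t, u, hu, htu⟩ := isOpen_pi_iff.1 hopen 0 (fun m _ => by simp [hG0])
  refine exists_charEval_eq_of_eq_one ((charEvalAddChar χ hχ).compAddMonoidHom φ) t fun a ha => ?_
  have hmem := htu (show a ∈ (t : Set M).pi u from fun m hm => by
    rw [ha m hm]
    exact (hu m hm).2)
  change charEval χ (G a) = 1
  rw [hprod]
  exact Finset.prod_eq_one fun m hm => by rw [hmem m hm, AddChar.map_zero_eq_one]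

end Characters

section StoneWeierstrass

variable {A M : Type*} [AddCommGroup A] [Finite A] [TopologicalSpace A]

/-- The continuous characters of `A^M`. -/
def charFunctions (A M : Type*) [AddCommGroup A] [TopologicalSpace A] : Set C(M → A, ℂ) :=
  {f | ∃ χ : M → AddChar A ℂ, {m | χ m ≠ 1}.Finite ∧ ∀ a, f a = charEval χ a}

theorem star_mem_charFunctions {f : C(M → A, ℂ)} (hf : f ∈ charFunctions A M) :
    star f ∈ charFunctions A M := by
  obtain ⟨χ, hχ, hf⟩ := hf
  obtain ⟨s, hsχ, hprod⟩ := exists_charEval_eq_prod hχ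
  refine ⟨fun m => (χ m)⁻¹, by simpa using hχ, fun a => ?_⟩
  rw [charEval_eq_prod (s := s) (fun m hm => (hsχ m).2 (by simpa using hm)),
    ContinuousMap.star_apply, hf, hprod]
  simp [AddChar.map_neg_eq_inv, AddChar.inv_apply_eq_conj]

/-- The star subalgebra of `C(A^M, ℂ)` generated by the characters. -/
noncomputable def charSubalgebra (A M : Type*) [AddCommGroup A] [Finite A] [TopologicalSpace A] :
    StarSubalgebra ℂ C(M → A, ℂ) where
  toSubalgebra := Algebra.adjoin ℂ (charFunctions A M)
  star_mem' := by
    change Algebra.adjoin ℂ (charFunctions A M) ≤ star (Algebra.adjoin ℂ (charFunctions A M))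
    exact Algebra.adjoin_le fun f hf => Algebra.subset_adjoin (star_mem_charFunctions hf)

theorem charSubalgebra_coe :
    Subalgebra.toSubmodule (charSubalgebra A M).toSubalgebra =
      Submodule.span ℂ (charFunctions A M) := by
  refine Algebra.adjoin_eq_span_of_subset ℂ (Set.Subset.trans ?_ Submodule.subset_span)
  intro f hf
  refine Submonoid.closure_induction (fun _ => id) ⟨1, by simp, fun a => by simp [charEval]⟩ ?_ hf
  rintro f g - - ⟨χ, hχ, hf⟩ ⟨ψ, hψ, hg⟩
  refine ⟨χ * ψ, (hχ.union hψ).subset fun m hm => ?_, fun a => ?_⟩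
  · by_contra h
    simp only [Set.mem_union, Set.mem_ofPred_eq, not_or, not_not] at h
    exact hm (by simp [h.1, h.2])
  · classical
    obtain ⟨s, hs, -⟩ := exists_charEval_eq_prod hχ
    obtain ⟨t, ht, -⟩ := exists_charEval_eq_prod hψ
    have hχs : {m | χ m ≠ 1} ⊆ ↑(s ∪ t) := fun m hm => by simp [(hs m).2 hm]
    have hψs : {m | ψ m ≠ 1} ⊆ ↑(s ∪ t) := fun m hm => by simp [(ht m).2 hm]
    have hχψs : {m | (χ * ψ) m ≠ 1} ⊆ ↑(s ∪ t) := fun m hm => by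
      by_contra h
      simp only [Finset.coe_union, Set.mem_union, Finset.mem_coe, hs, ht, not_or, not_not] at h
      exact hm (by simp [h.1, h.2])
    rw [ContinuousMap.mul_apply, hf, hg, charEval_eq_prod hχs, charEval_eq_prod hψs,
      charEval_eq_prod hχψs, ← Finset.prod_mul_distrib]
    simp

variable [DiscreteTopology A]

theorem charSubalgebra_separatesPoints : (charSubalgebra A M).SeparatesPoints := by
  classical
  intro x y hxy
  obtain ⟨m, hm⟩ := Function.ne_iff.1 hxy
  obtain ⟨ψ, hψ⟩ := AddChar.exists_apply_ne_zero.2 (sub_ne_zero.2 hm)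
  have hs : {k | Pi.mulSingle (M := fun _ => AddChar A ℂ) m ψ k ≠ 1} ⊆ ({m} : Finset M) := by
    intro k hk
    by_contra h
    exact hk (Pi.mulSingle_eq_of_ne (by simpa using h) _)
  have hfin := (Finset.finite_toSet {m}).subset hs
  refine ⟨_, ⟨⟨_, continuous_charEval hfin⟩, Algebra.subset_adjoin ⟨_, hfin, fun _ => rfl⟩, rfl⟩,
    fun h => hψ ?_⟩
  simp only [ContinuousMap.coe_mk, charEval_eq_prod hs, Finset.prod_singleton,
    Pi.mulSingle_eq_same] at h
  rw [AddChar.map_sub_eq_div, h, ← AddChar.map_sub_eq_div, sub_self, AddChar.map_zero_eq_one]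

theorem span_charFunctions_topologicalClosure_eq_top :
    (Submodule.span ℂ (charFunctions A M)).topologicalClosure = ⊤ := by
  rw [← charSubalgebra_coe]
  exact congr_arg (Subalgebra.toSubmodule <| StarSubalgebra.toSubalgebra ·)
    (ContinuousMap.starSubalgebra_topologicalClosure_eq_top_of_separatesPoints
      (charSubalgebra A M) charSubalgebra_separatesPoints)

end StoneWeierstrass

section WeakConvergence

variable {X : Type*} [TopologicalSpace X] [CompactSpace X] [MeasurableSpace X]
  [OpensMeasurableSpace X]

theorem ContinuousMap.integrable_of_isFiniteMeasure (ν : Measure X) [IsFiniteMeasure ν]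
    (g : C(X, ℂ)) : Integrable g ν :=
  Integrable.of_bound g.continuous.aestronglyMeasurable ‖g‖
    (Eventually.of_forall g.norm_coe_le_norm)

theorem norm_integral_sub_integral_le (ν : Measure X) [IsProbabilityMeasure ν] (f g : C(X, ℂ)) :
    ‖∫ x, f x ∂ν - ∫ x, g x ∂ν‖ ≤ ‖f - g‖ := by
  rw [← integral_sub (f.integrable_of_isFiniteMeasure ν) (g.integrable_of_isFiniteMeasure ν)]
  simpa using norm_integral_le_of_norm_le_const (μ := ν)
    (Eventually.of_forall (f - g).norm_coe_le_norm)

theorem tendsto_integral_of_span_dense {ι : Type*} {l : Filter ι} {ν : ι → Measure X}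
    [∀ i, IsProbabilityMeasure (ν i)] {lam : Measure X} [IsProbabilityMeasure lam]
    {S : Set C(X, ℂ)} (hS : (Submodule.span ℂ S).topologicalClosure = ⊤)
    (h : ∀ f ∈ S, Tendsto (fun i => ∫ x, f x ∂(ν i)) l (nhds (∫ x, f x ∂lam))) (g : C(X, ℂ)) :
    Tendsto (fun i => ∫ x, g x ∂(ν i)) l (nhds (∫ x, g x ∂lam)) := by
  have hspan (f : C(X, ℂ)) (hf : f ∈ Submodule.span ℂ S) :
      Tendsto (fun i => ∫ x, f x ∂(ν i)) l (nhds (∫ x, f x ∂lam)) := by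
    induction hf using Submodule.span_induction with
    | mem f hf => exact h f hf
    | zero => simpa using tendsto_const_nhds
    | add f₁ f₂ _ _ h₁ h₂ =>
      have key (κ : Measure X) [IsProbabilityMeasure κ] :
          ∫ x, (f₁ + f₂) x ∂κ = ∫ x, f₁ x ∂κ + ∫ x, f₂ x ∂κ :=
        integral_add (f₁.integrable_of_isFiniteMeasure κ) (f₂.integrable_of_isFiniteMeasure κ)
      simpa only [key] using h₁.add h₂
    | smul c f _ hf =>
      simpa only [ContinuousMap.smul_apply, integral_smul] using hf.const_smul c
  have hg : g ∈ closure (Submodule.span ℂ S : Set C(X, ℂ)) := by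
    rw [← Submodule.topologicalClosure_coe, hS]
    trivial
  rw [Metric.tendsto_nhds]
  intro ε hε
  obtain ⟨f, hf, hgf⟩ := Metric.mem_closure_iff.1 hg (ε / 3) (by positivity)
  rw [dist_eq_norm] at hgf
  filter_upwards [Metric.tendsto_nhds.1 (hspan f hf) (ε / 3) (by positivity)] with i hi
  have h₁ := norm_integral_sub_integral_le (ν i) g f
  have h₂ := norm_integral_sub_integral_le lam g f
  rw [← dist_eq_norm] at h₁ h₂
  have h₃ := dist_triangle4 (∫ x, g x ∂(ν i)) (∫ x, f x ∂(ν i)) (∫ x, f x ∂lam) (∫ x, g x ∂lam)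
  rw [dist_comm (∫ x, f x ∂lam)] at h₃
  linarith

end WeakConvergence

section Haar

variable {A M : Type*} [MeasurableSpace A]

/-- A measurable subset of `A^M` is invariant under exchanging two inseparable letters at one
coordinate. -/
theorem update_mem_of_measurableSet [DecidableEq M] {c d : A}
    (hcd : ∀ s : Set A, MeasurableSet s → (c ∈ s ↔ d ∈ s)) (m : M) {S : Set (M → A)}
    (hS : MeasurableSet S) {a : M → A} (ha : a m = d) : a ∈ S ↔ Function.update a m c ∈ S := by
  classical
  let φ : (M → A) → (M → A) := fun a => if a m = d then Function.update a m c else a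
  have hle : (MeasurableSpace.pi : MeasurableSpace (M → A)) ≤ MeasurableSpace.invariants φ := by
    refine iSup_le fun k => ?_
    rintro _ ⟨s, hs, rfl⟩
    refine MeasurableSpace.measurableSet_invariants.2 ⟨measurable_pi_apply k hs, ?_⟩
    ext b
    by_cases hb : b m = d
    · rcases eq_or_ne k m with rfl | hk
      · simp [φ, hb, hcd s hs]
      · simp [φ, hb, hk]
    · simp [φ, hb]
  have h := (MeasurableSpace.measurableSet_invariants.1 (hle S hS)).2
  rw [Set.ext_iff] at h
  simpa [φ, ha] using (h a).symm

/-- If the uniform cylinder masses define a probability measure, the letters are measurable. -/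
theorem measurableSingletonClass_of_cylinder [Fintype A] [Nonempty M] (lam : Measure (M → A))
    [IsProbabilityMeasure lam]
    (hlam : ∀ (s : Finset M) (f : M → A),
      lam {a | ∀ m ∈ s, a m = f m} = (1 / (Fintype.card A : ENNReal)) ^ s.card) :
    MeasurableSingletonClass A := by
  classical
  suffices MeasurableSpace.SeparatesPoints A from inferInstance
  refine ⟨fun c d hcd => ?_⟩
  by_contra hne
  obtain ⟨m⟩ := ‹Nonempty M›
  have hiff (s : Set A) (hs : MeasurableSet s) : c ∈ s ↔ d ∈ s :=
    ⟨hcd s hs, fun hd => by_contra fun hc => hcd sᶜ hs.compl hc hd⟩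
  have hmass (x : A) : lam {a | a m = x} = 1 / (Fintype.card A : ENNReal) := by
    simpa using hlam {m} fun _ => x
  have hcover : (Set.univ : Set (M → A)) ⊆
      ⋃ x ∈ Finset.univ.erase d, toMeasurable lam {a | a m = x} := by
    intro a _
    simp only [Set.mem_iUnion, Finset.mem_erase, Finset.mem_univ, and_true]
    by_cases ha : a m = d
    · refine ⟨c, hne, ?_⟩
      rw [update_mem_of_measurableSet hiff m (measurableSet_toMeasurable _ _) ha]
      exact subset_toMeasurable _ _ (by simp)
    · exact ⟨a m, ha, subset_toMeasurable _ _ rfl⟩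
  have hle : (1 : ENNReal) ≤ (Fintype.card A - 1 : ℕ) * (1 / (Fintype.card A : ENNReal)) := by
    calc (1 : ENNReal) = lam Set.univ := measure_univ.symm
      _ ≤ ∑ x ∈ Finset.univ.erase d, lam (toMeasurable lam {a | a m = x}) :=
        (measure_mono hcover).trans (measure_biUnion_finset_le _ _)
      _ = _ := by
        simp only [measure_toMeasurable, hmass, Finset.sum_const, nsmul_eq_mul,
          Finset.card_erase_of_mem (Finset.mem_univ d), Finset.card_univ]
  have hpos : 0 < Fintype.card A := Fintype.card_pos_iff.2 ⟨d⟩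
  rw [mul_one_div, ENNReal.le_div_iff_mul_le (by simp [hpos.ne']) (by simp), one_mul,
    Nat.cast_le] at hle
  omega

theorem integral_charEval_eq_zero [Fintype A] [AddCommGroup A] [MeasurableSingletonClass A]
    (lam : Measure (M → A)) [IsProbabilityMeasure lam]
    (hlam : ∀ (s : Finset M) (f : M → A),
      lam {a | ∀ m ∈ s, a m = f m} = (1 / (Fintype.card A : ENNReal)) ^ s.card)
    {χ : M → AddChar A ℂ} (hχ : {m | χ m ≠ 1}.Finite) {m₀ : M} (hm₀ : χ m₀ ≠ 1) :
    ∫ a, charEval χ a ∂lam = 0 := by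
  classical
  obtain ⟨s, hs, hprod⟩ := exists_charEval_eq_prod hχ
  have hr : Measurable (s.restrict : (M → A) → (s → A)) := Finset.measurable_restrict s
  let G : (s → A) → ℂ := fun f => ∏ m : s, χ m (f m)
  have hcomp (a : M → A) : charEval χ a = G (s.restrict a) := by
    rw [hprod, ← Finset.prod_coe_sort]
    rfl
  have hmass (f : s → A) :
      (lam.map s.restrict).real {f} = ((1 / (Fintype.card A : ENNReal)) ^ s.card).toReal := by
    rw [measureReal_def, Measure.map_apply hr (measurableSet_singleton f),
      ← hlam s fun m => if h : m ∈ s then f ⟨m, h⟩ else 0]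
    congr 2
    ext a
    simp only [Set.mem_preimage, Set.mem_singleton_iff, funext_iff, Set.mem_ofPred_eq,
      Subtype.forall]
    exact forall₂_congr fun m hm => by simp [hm]
  have hsum : ∑ f : s → A, G f = 0 := by
    simp only [G]
    rw [← Fintype.piFinset_univ, ← Finset.prod_univ_sum (fun _ => Finset.univ)
      (fun (m : s) x => χ m x)]
    exact Finset.prod_eq_zero (Finset.mem_univ ⟨m₀, (hs m₀).2 hm₀⟩)
      (AddChar.sum_eq_zero_of_ne_one hm₀)
  have : IsProbabilityMeasure (lam.map s.restrict) :=
    Measure.isProbabilityMeasure_map hr.aemeasurable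
  simp only [hcomp]
  rw [← integral_map hr.aemeasurable Measurable.of_discrete.aestronglyMeasurable,
    integral_fintype Integrable.of_finite]
  simp only [hmass]
  rw [← Finset.smul_sum, hsum, smul_zero]

end Haar

/-- A linear cellular automaton that is diffusive in density pushes any
harmonically mixing probability measure to Haar measure weak*, along a subset
`J ⊆ ℕ` of Cesàro density 1; consequently the Cesàro averages of `F^n μ`
converge weak* to Haar measure. -/
theorem diffusive_in_density_pushes_to_haar (A : Type*) [AddCommGroup A] [Fintype A]
    [MeasurableSpace A] [TopologicalSpace A] [DiscreteTopology A]
    (M : Type*) [Monoid M] [Countable M]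
    (F : (M → A) → (M → A)) (hF_cont : Continuous F)
    (hF_add : ∀ x y, F (x + y) = F x + F y)
    (hF_shift : ∀ (e : M) (x : M → A), F (fun m => x (e * m)) = fun m => F x (e * m))
    (μ : Measure (M → A)) [IsProbabilityMeasure μ] (hμ : HarmonicallyMixing μ)
    (hdiff : ∀ χ : M → AddChar A ℂ, {m | χ m ≠ 1}.Finite → (∃ m, χ m ≠ 1) →
      ∃ Jχ : Set ℕ, HasDensityOne Jχ ∧
        ∀ ψ : ℕ → M → AddChar A ℂ, (∀ n, {m | ψ n m ≠ 1}.Finite) →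
        (∀ (n : ℕ) (a : M → A), charEval (ψ n) a = charEval χ (F^[n] a)) →
        Tendsto (fun n => ({m | ψ n m ≠ 1}).ncard) (atTop ⊓ Filter.principal Jχ) atTop)
    (lam : Measure (M → A)) [IsProbabilityMeasure lam]
    (hlam : ∀ (s : Finset M) (f : M → A),
      lam {a | ∀ m ∈ s, a m = f m} = (1 / (Fintype.card A : ENNReal)) ^ s.card) :
    (∃ J : Set ℕ, HasDensityOne J ∧
      ∀ g : (M → A) → ℂ, Continuous g →
        Tendsto (fun n => ∫ a, g a ∂(μ.map F^[n])) (atTop ⊓ Filter.principal J)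
          (nhds (∫ a, g a ∂lam))) ∧
    (∀ g : (M → A) → ℂ, Continuous g →
      Tendsto (fun N : ℕ => (N : ℝ)⁻¹ • ∑ n ∈ Finset.Icc 1 N, ∫ a, g a ∂(μ.map F^[n]))
        atTop (nhds (∫ a, g a ∂lam))) := by
  have : MeasurableSingletonClass A := measurableSingletonClass_of_cylinder lam hlam
  have : BorelSpace A := ⟨by
    rw [borel_eq_top_of_discrete]
    exact eq_top_iff.2 fun s _ => s.toFinite.measurableSet⟩
  have hiter_cont (n : ℕ) : Continuous F^[n] := hF_cont.iterate n
  have hiter_meas (n : ℕ) : Measurable F^[n] := (hiter_cont n).measurable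
  have hiter_add (n : ℕ) (x y : M → A) : F^[n] (x + y) = F^[n] x + F^[n] y := by
    induction n with
    | zero => rfl
    | succ n ih => simp only [Function.iterate_succ_apply', ih, hF_add]
  have (n : ℕ) : IsProbabilityMeasure (μ.map F^[n]) :=
    Measure.isProbabilityMeasure_map (hiter_meas n).aemeasurable
  let ι := {χ : M → AddChar A ℂ | {m | χ m ≠ 1}.Finite}
  have : Countable ι := countable_finite_support.to_subtype
  have hchar (χ : ι) : ∃ J : Set ℕ, HasDensityOne J ∧
      Tendsto (fun n => ∫ a, charEval χ.1 a ∂(μ.map F^[n])) (atTop ⊓ 𝓟 J)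
        (nhds (∫ a, charEval χ.1 a ∂lam)) := by
    obtain ⟨χ, hχ⟩ := χ
    by_cases htriv : ∃ m, χ m ≠ 1
    · obtain ⟨J, hJ, hrank⟩ := hdiff χ hχ htriv
      refine ⟨J, hJ, ?_⟩
      choose ψ hψ hψF using fun n => exists_charEval_eq_comp (hiter_cont n) (hiter_add n) hχ
      obtain ⟨m₀, hm₀⟩ := htriv
      rw [integral_charEval_eq_zero lam hlam hχ hm₀, Metric.tendsto_nhds]
      intro ε hε
      obtain ⟨R, hR⟩ := hμ ε hε
      filter_upwards [(hrank ψ hψ hψF).eventually_gt_atTop R] with n hn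
      rw [dist_zero_right, integral_map (hiter_meas n).aemeasurable
        (continuous_charEval hχ).aestronglyMeasurable]
      simpa only [hψF] using hR (ψ n) (hψ n) hn
    · refine ⟨Set.univ, hasDensityOne_univ, ?_⟩
      push Not at htriv
      simp [charEval, htriv]
  choose J hJ hJχ using hchar
  obtain ⟨K, hK, hKJ⟩ := exists_hasDensityOne_eventually_subset hJ
  have hle (χ : ι) : atTop ⊓ 𝓟 K ≤ atTop ⊓ 𝓟 (J χ) :=
    le_inf inf_le_left (le_principal_iff.2 (eventually_inf_principal.2 (hKJ χ)))
  have hconv (g : (M → A) → ℂ) (hg : Continuous g) :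
      Tendsto (fun n => ∫ a, g a ∂(μ.map F^[n])) (atTop ⊓ 𝓟 K) (nhds (∫ a, g a ∂lam)) := by
    refine tendsto_integral_of_span_dense span_charFunctions_topologicalClosure_eq_top ?_ ⟨g, hg⟩
    rintro f ⟨χ, hχ, hf⟩
    simpa only [hf] using (hJχ ⟨χ, hχ⟩).mono_left (hle ⟨χ, hχ⟩)
  refine ⟨⟨K, hK, hconv⟩, fun g hg => ?_⟩
  let g' : C(M → A, ℂ) := ⟨g, hg⟩
  have hbound (ν : Measure (M → A)) [IsProbabilityMeasure ν] : ‖∫ a, g a ∂ν‖ ≤ ‖g'‖ := by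
    change ‖∫ a, g' a ∂ν‖ ≤ ‖g'‖
    simpa using norm_integral_le_of_norm_le_const (μ := ν)
      (Eventually.of_forall g'.norm_coe_le_norm)
  exact hK.tendsto_cesaro_smul_Icc (fun n => hbound _) (hconv g hg)
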